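/- Let λ ≥ 1 be real and let f belong to the class S*_{Σ,q}(λ;φ). Then the third Maclaurin coefficient of f is a₃ = E₁(c₂ − d₂)/(4(λ[3]_q − 1)) + E₁²c₁²/(4λ²([2]_q)²). -/

import Mathlib

open Complex Metric Set

noncomputable def symQ (q x : ℝ) : ℝ := (Real.rpow q x - Real.rpow q (-x)) / (q - q⁻¹)

noncomputable def Dq (q : ℝ) (f : ℂ → ℂ) (z : ℂ) : ℂ :=
  if z = 0 then deriv f 0
  else (f ((q : ℂ) * z) - f (z / (q : ℂ))) / (((q : ℂ) - (q : ℂ)⁻¹) * z)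

def IsSchwarz (u : ℂ → ℂ) : Prop :=
  AnalyticOnNhd ℂ u (ball 0 1) ∧ u 0 = 0 ∧ ∀ z ∈ ball (0 : ℂ) 1, u z ∈ ball (0 : ℂ) 1

/-!
Everything happens at the level of Taylor coefficients at `0`. Comparing coefficients in
`2 z (D_q f z) ^ λ = (f z - f (-z)) φ (u z)`, the first order gives `λ [2]_q a₂ = E₁ c₁ / 2`; for
`g`, whose second coefficient is `-a₂`, it gives `-λ [2]_q a₂ = E₁ d₁ / 2`, so `d₁ = -c₁`.
In the second-order relations for `f` and `g` the contributions of the quadratic coefficients of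
`w ^ λ` and of `φ` are therefore the same, and subtracting the two relations leaves
`2 (λ [3]_q - 1) (a₃ - a₂ ^ 2) = E₁ (c₂ - d₂) / 2`.
-/

open Filter
open scoped Topology

section TaylorCoeff

variable {𝕜 : Type*} [NontriviallyNormedField 𝕜] {f g : 𝕜 → 𝕜} {x : 𝕜} {n : ℕ}

/-- The coefficient of `(z - x) ^ n` in the Taylor expansion of `f` at `x`, defined through the
iterated derivative so that it makes sense without choosing a power series for `f`. -/
noncomputable def taylorCoeff (f : 𝕜 → 𝕜) (x : 𝕜) (n : ℕ) : 𝕜 := iteratedDeriv n f x / n.factorial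

lemma taylorCoeff_zero (f : 𝕜 → 𝕜) (x : 𝕜) : taylorCoeff f x 0 = f x := by
  simp [taylorCoeff]

lemma taylorCoeff_one (f : 𝕜 → 𝕜) (x : 𝕜) : taylorCoeff f x 1 = deriv f x := by
  simp [taylorCoeff]

lemma taylorCoeff_congr (h : f =ᶠ[𝓝 x] g) (n : ℕ) : taylorCoeff f x n = taylorCoeff g x n := by
  rw [taylorCoeff, taylorCoeff, h.iteratedDeriv_eq]

lemma taylorCoeff_const_add (hn : 0 < n) (c : 𝕜) (f : 𝕜 → 𝕜) (x : 𝕜) :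
    taylorCoeff (fun z ↦ c + f z) x n = taylorCoeff f x n := by
  rw [taylorCoeff, taylorCoeff, iteratedDeriv_const_add hn]

lemma taylorCoeff_const_sub (hn : 0 < n) (c : 𝕜) (f : 𝕜 → 𝕜) (x : 𝕜) :
    taylorCoeff (fun z ↦ c - f z) x n = -taylorCoeff f x n := by
  rw [taylorCoeff, taylorCoeff, iteratedDeriv_const_sub hn, iteratedDeriv_neg, neg_div]

lemma taylorCoeff_sub (hf : ContDiffAt 𝕜 n f x) (hg : ContDiffAt 𝕜 n g x) :
    taylorCoeff (fun z ↦ f z - g z) x n = taylorCoeff f x n - taylorCoeff g x n := by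
  simp only [taylorCoeff, iteratedDeriv_fun_sub hf hg, sub_div]

lemma taylorCoeff_const_mul (c : 𝕜) (f : 𝕜 → 𝕜) (x : 𝕜) (n : ℕ) :
    taylorCoeff (fun z ↦ c * f z) x n = c * taylorCoeff f x n := by
  simp only [taylorCoeff, iteratedDeriv_const_mul_field, mul_div_assoc]

lemma taylorCoeff_id (x : 𝕜) (n : ℕ) :
    taylorCoeff (fun z ↦ z) x n = if n = 0 then x else if n = 1 then 1 else 0 := by
  rw [taylorCoeff, iteratedDeriv_fun_id]
  split_ifs with h₀ h₁ <;> simp [*]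

lemma taylorCoeff_comp_one (hg : DifferentiableAt 𝕜 g (f x)) (hf : DifferentiableAt 𝕜 f x) :
    taylorCoeff (fun z ↦ g (f z)) x 1 = taylorCoeff g (f x) 1 * taylorCoeff f x 1 := by
  simp only [taylorCoeff_one]
  exact deriv_comp x hg hf

lemma analyticAt_dslope (hf : AnalyticAt 𝕜 f x) : AnalyticAt 𝕜 (dslope f x) x :=
  let ⟨_, hp⟩ := hf
  hp.has_fpower_series_dslope_fslope.analyticAt

lemma analyticAt_comp_const_mul (hf : AnalyticAt 𝕜 f 0) (s : 𝕜) :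
    AnalyticAt 𝕜 (fun z ↦ f (s * z)) 0 :=
  hf.comp_of_eq (by fun_prop) (mul_zero s)

lemma analyticAt_comp_neg (hf : AnalyticAt 𝕜 f 0) : AnalyticAt 𝕜 (fun z ↦ f (-z)) 0 :=
  hf.comp_of_eq (by fun_prop) neg_zero

variable [CharZero 𝕜]

lemma taylorCoeff_mul (hf : ContDiffAt 𝕜 n f x) (hg : ContDiffAt 𝕜 n g x) :
    taylorCoeff (fun z ↦ f z * g z) x n =
      ∑ p ∈ Finset.HasAntidiagonal.antidiagonal n, taylorCoeff f x p.1 * taylorCoeff g x p.2 := by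
  rw [taylorCoeff, iteratedDeriv_fun_mul hf hg, Finset.sum_div,
    Finset.Nat.sum_antidiagonal_eq_sum_range_succ_mk]
  refine Finset.sum_congr rfl fun i hi ↦ ?_
  rw [taylorCoeff, taylorCoeff, Nat.cast_choose 𝕜 (Finset.mem_range_succ_iff.mp hi)]
  have : (n.factorial : 𝕜) ≠ 0 := mod_cast n.factorial_ne_zero
  field

lemma taylorCoeff_id_mul (hf : ContDiffAt 𝕜 (n + 1 : ℕ) f 0) :
    taylorCoeff (fun z ↦ z * f z) 0 (n + 1) = taylorCoeff f 0 n := by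
  rw [taylorCoeff_mul (f := fun z ↦ z) contDiffAt_id hf]
  simp [taylorCoeff_id, Finset.Nat.antidiagonal_succ,
    Finset.Nat.sum_antidiagonal_eq_sum_range_succ_mk]

lemma taylorCoeff_comp_two (hg : ContDiffAt 𝕜 2 g (f x)) (hf : ContDiffAt 𝕜 2 f x) :
    taylorCoeff (fun z ↦ g (f z)) x 2 =
      taylorCoeff g (f x) 1 * taylorCoeff f x 2 +
        taylorCoeff g (f x) 2 * taylorCoeff f x 1 ^ 2 := by
  have h := iteratedDeriv_comp_two hg hf
  simp only [taylorCoeff, Function.comp_def, iteratedDeriv_one] at h ⊢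
  rw [h]
  norm_num [Nat.factorial]
  ring

lemma taylorCoeff_comp_three (hg : ContDiffAt 𝕜 3 g (f x)) (hf : ContDiffAt 𝕜 3 f x) :
    taylorCoeff (fun z ↦ g (f z)) x 3 =
      taylorCoeff g (f x) 1 * taylorCoeff f x 3 +
        2 * taylorCoeff g (f x) 2 * taylorCoeff f x 1 * taylorCoeff f x 2 +
        taylorCoeff g (f x) 3 * taylorCoeff f x 1 ^ 3 := by
  have h := iteratedDeriv_comp_three hg hf
  simp only [taylorCoeff, Function.comp_def, iteratedDeriv_one] at h ⊢
  rw [h]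
  norm_num [Nat.factorial]
  ring

lemma taylorCoeff_of_leftInverse (hf : ContDiffAt 𝕜 3 f x) (hg : ContDiffAt 𝕜 3 g (f x))
    (hf' : deriv f x = 1) (hgf : ∀ᶠ z in 𝓝 x, g (f z) = z) :
    taylorCoeff g (f x) 1 = 1 ∧ taylorCoeff g (f x) 2 = -taylorCoeff f x 2 ∧
      taylorCoeff g (f x) 3 = 2 * taylorCoeff f x 2 ^ 2 - taylorCoeff f x 3 := by
  have hid (n : ℕ) := (taylorCoeff_congr hgf n).trans (taylorCoeff_id x n)
  have hf₁ : taylorCoeff f x 1 = 1 := by rw [taylorCoeff_one, hf']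
  have h₁ := (taylorCoeff_comp_one (hg.differentiableAt (by simp))
    (hf.differentiableAt (by simp))).symm.trans (hid 1)
  have h₂ := (taylorCoeff_comp_two (hg.of_le (by norm_num))
    (hf.of_le (by norm_num))).symm.trans (hid 2)
  have h₃ := (taylorCoeff_comp_three hg hf).symm.trans (hid 3)
  grind

lemma eventually_sub_comp_neg_ne_zero (hf : DifferentiableAt 𝕜 f 0) (hf' : deriv f 0 ≠ 0) :
    ∀ᶠ z in 𝓝[≠] 0, f z - f (-z) ≠ 0 := by
  have hneg : HasDerivAt (fun z ↦ f (-z)) (-deriv f 0) 0 := by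
    simpa using! hf.hasDerivAt.comp_of_eq (0 : 𝕜) (hasDerivAt_neg 0) neg_zero.symm
  refine (hf.hasDerivAt.sub hneg).eventually_ne ?_
  simpa [← two_mul] using hf'

variable [CompleteSpace 𝕜] {b : ℕ → 𝕜}

lemma hasSum_taylorCoeff (hf : AnalyticAt 𝕜 f 0) :
    ∀ᶠ z in 𝓝 0, HasSum (fun n ↦ taylorCoeff f 0 n * z ^ n) (f z) := by
  simpa [taylorCoeff, FormalMultilinearSeries.coeff_ofScalars, mul_comm] using
    hasFPowerSeriesAt_iff.mp hf.hasFPowerSeriesAt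

lemma taylorCoeff_eq_of_hasSum (h : ∀ᶠ z in 𝓝 0, HasSum (fun n ↦ b n * z ^ n) (f z)) (n : ℕ) :
    taylorCoeff f 0 n = b n := by
  have hb : HasFPowerSeriesAt f (.ofScalars 𝕜 b) 0 := by
    simpa [hasFPowerSeriesAt_iff, FormalMultilinearSeries.coeff_ofScalars, mul_comm] using h
  have := hb.analyticAt.hasFPowerSeriesAt.eq_formalMultilinearSeries hb
  simpa [taylorCoeff, FormalMultilinearSeries.coeff_ofScalars] using congrArg (·.coeff n) this

-- A divergent `tsum` is zero, so nonvanishing of `f` forces convergence.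
lemma taylorCoeff_eq_of_tsum (h : ∀ᶠ z in 𝓝 0, f z = ∑' n, b n * z ^ n)
    (hne : ∀ᶠ z in 𝓝[≠] 0, f z ≠ 0) (n : ℕ) : taylorCoeff f 0 n = b n := by
  refine taylorCoeff_eq_of_hasSum ?_ n
  filter_upwards [h, eventually_nhdsWithin_iff.mp hne] with z hz hz0
  rw [hz] at hz0 ⊢
  refine Summable.hasSum ?_
  rcases eq_or_ne z 0 with rfl | hz'
  · exact summable_of_ne_finset_zero (s := {0}) (by simp +contextual)
  · exact not_imp_comm.mp tsum_eq_zero_of_not_summable (hz0 hz')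

lemma taylorCoeff_comp_const_mul (hf : AnalyticAt 𝕜 f 0) (s : 𝕜) (n : ℕ) :
    taylorCoeff (fun z ↦ f (s * z)) 0 n = s ^ n * taylorCoeff f 0 n := by
  have hs : Tendsto (fun z : 𝕜 ↦ s * z) (𝓝 0) (𝓝 0) := by
    simpa using (continuous_const_mul s).tendsto 0
  refine taylorCoeff_eq_of_hasSum (b := fun n ↦ s ^ n * taylorCoeff f 0 n) ?_ n
  filter_upwards [hs.eventually (hasSum_taylorCoeff hf)] with z hz
  simpa only [mul_pow, mul_left_comm, mul_assoc] using hz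

lemma taylorCoeff_dslope (hf : AnalyticAt 𝕜 f 0) (n : ℕ) :
    taylorCoeff (dslope f 0) 0 n = taylorCoeff f 0 (n + 1) := by
  rw [← taylorCoeff_id_mul (analyticAt_dslope hf).contDiffAt,
    ← taylorCoeff_const_add n.succ_pos (f 0)]
  congr 1
  ext z
  simpa [eq_sub_iff_add_eq'] using sub_smul_dslope f 0 z

lemma taylorCoeff_sub_comp_neg (hf : AnalyticAt 𝕜 f 0) (n : ℕ) :
    taylorCoeff (fun z ↦ f z - f (-z)) 0 n = (1 - (-1) ^ n) * taylorCoeff f 0 n := by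
  have h := taylorCoeff_comp_const_mul hf (-1) n
  simp only [neg_mul, one_mul] at h
  rw [taylorCoeff_sub hf.contDiffAt (analyticAt_comp_neg hf).contDiffAt, h]
  ring

lemma taylorCoeff_of_two_mul_id_mul_eq {A B : 𝕜 → 𝕜} (hf : AnalyticAt 𝕜 f 0)
    (hA : AnalyticAt 𝕜 A 0) (hB : AnalyticAt 𝕜 B 0)
    (h : (fun z ↦ 2 * (z * A z)) =ᶠ[𝓝 0] fun z ↦ (f z - f (-z)) * B z) :
    taylorCoeff A 0 1 = taylorCoeff f 0 1 * taylorCoeff B 0 1 ∧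
      taylorCoeff A 0 2 =
        taylorCoeff f 0 1 * taylorCoeff B 0 2 + taylorCoeff f 0 3 * taylorCoeff B 0 0 := by
  have hodd : AnalyticAt 𝕜 (fun z ↦ f z - f (-z)) 0 := hf.sub (analyticAt_comp_neg hf)
  have hcoeff (n : ℕ) : 2 * taylorCoeff A 0 n = ∑ p ∈ Finset.HasAntidiagonal.antidiagonal (n + 1),
      (1 - (-1) ^ p.1) * taylorCoeff f 0 p.1 * taylorCoeff B 0 p.2 := by
    rw [← taylorCoeff_id_mul hA.contDiffAt, ← taylorCoeff_const_mul, taylorCoeff_congr h,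
      taylorCoeff_mul hodd.contDiffAt hB.contDiffAt]
    simp only [taylorCoeff_sub_comp_neg hf]
  constructor
  · refine mul_left_cancel₀ two_ne_zero ((hcoeff 1).trans ?_)
    norm_num [Finset.Nat.antidiagonal_succ, mul_assoc]
  · refine mul_left_cancel₀ two_ne_zero ((hcoeff 2).trans ?_)
    norm_num [Finset.Nat.antidiagonal_succ]
    ring

lemma taylorCoeff_of_cayley {u : 𝕜 → 𝕜} (hu : AnalyticAt 𝕜 u 0) (hu0 : u 0 = 0) :
    let p := fun z ↦ (1 + u z) / (1 - u z)
    taylorCoeff u 0 1 = taylorCoeff p 0 1 / 2 ∧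
      taylorCoeff u 0 2 = taylorCoeff p 0 2 / 2 - taylorCoeff p 0 1 ^ 2 / 4 := by
  intro p
  have hp0 : p 0 = 1 := by simp [p, hu0]
  have hden : AnalyticAt 𝕜 (fun z ↦ 1 - u z) 0 := analyticAt_const.sub hu
  have hp : AnalyticAt 𝕜 p 0 := (analyticAt_const.add hu).div hden (by simp [hu0])
  have hmul : (fun z ↦ p z * (1 - u z)) =ᶠ[𝓝 0] fun z ↦ 1 + u z := by
    filter_upwards [hden.continuousAt.eventually_ne (show 1 - u 0 ≠ 0 by simp [hu0])] with z hz
    exact div_mul_cancel₀ _ hz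
  have hcoeff (n : ℕ) :=
    (taylorCoeff_mul hp.contDiffAt hden.contDiffAt).symm.trans (taylorCoeff_congr hmul n)
  have h₁ : -taylorCoeff u 0 1 + taylorCoeff p 0 1 = taylorCoeff u 0 1 := by
    simpa [Finset.Nat.antidiagonal_succ, taylorCoeff_const_add, taylorCoeff_const_sub,
      taylorCoeff_zero, hp0, hu0] using hcoeff 1
  have h₂ : -taylorCoeff u 0 2 + (-(taylorCoeff p 0 1 * taylorCoeff u 0 1) + taylorCoeff p 0 2) =
      taylorCoeff u 0 2 := by
    simpa [Finset.Nat.antidiagonal_succ, taylorCoeff_const_add, taylorCoeff_const_sub,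
      taylorCoeff_zero, hp0, hu0] using hcoeff 2
  grind

lemma taylorCoeff_of_cayley_eq_tsum {u : 𝕜 → 𝕜} (hu : AnalyticAt 𝕜 u 0) (hu0 : u 0 = 0)
    (h : ∀ᶠ z in 𝓝 0, (1 + u z) / (1 - u z) = ∑' n, b n * z ^ n) :
    taylorCoeff u 0 1 = b 1 / 2 ∧ taylorCoeff u 0 2 = b 2 / 2 - b 1 ^ 2 / 4 := by
  have hp : ContinuousAt (fun z ↦ (1 + u z) / (1 - u z)) 0 :=
    (continuousAt_const.add hu.continuousAt).div (continuousAt_const.sub hu.continuousAt)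
      (by simp [hu0])
  have hne : ∀ᶠ z in 𝓝 0, (1 + u z) / (1 - u z) ≠ 0 :=
    hp.eventually_ne (show (1 + u 0) / (1 - u 0) ≠ 0 by simp [hu0])
  have hb := taylorCoeff_eq_of_tsum h (hne.filter_mono nhdsWithin_le_nhds)
  simpa only [hb] using taylorCoeff_of_cayley hu hu0

end TaylorCoeff

section SymmetricQCalculus

variable {q : ℝ}

lemma sub_inv_ne_zero_of_pos (hq0 : 0 < q) (hq1 : q ≠ 1) : q - q⁻¹ ≠ 0 := by
  rw [sub_ne_zero, Ne, self_eq_inv₀]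
  grind

lemma one_lt_symQ (hq0 : 0 < q) (hq1 : q ≠ 1) {x : ℝ} (hx : 1 < x) : 1 < symQ q x := by
  rcases hq1.lt_or_gt with hlt | hgt
  · have hpow : q ^ x < q := by simpa using Real.rpow_lt_rpow_of_exponent_gt hq0 hlt hx
    have hinv : q⁻¹ < q ^ (-x) := by
      simpa [Real.rpow_neg_one] using Real.rpow_lt_rpow_of_exponent_gt hq0 hlt (neg_lt_neg hx)
    have hden : q - q⁻¹ < 0 := by linarith [(one_lt_inv₀ hq0).2 hlt]
    exact (one_lt_div_of_neg hden).2 (sub_lt_sub hpow hinv)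
  · have hpow : q < q ^ x := by simpa using Real.rpow_lt_rpow_of_exponent_lt hgt hx
    have hinv : q ^ (-x) < q⁻¹ := by
      simpa [Real.rpow_neg_one] using Real.rpow_lt_rpow_of_exponent_lt hgt (neg_lt_neg hx)
    have hden : 0 < q - q⁻¹ := by linarith [inv_lt_one_of_one_lt₀ hgt]
    exact (one_lt_div hden).2 (sub_lt_sub hpow hinv)

lemma symQ_natCast (hq : 0 ≤ q) (n : ℕ) : symQ q n = (q ^ n - q⁻¹ ^ n) / (q - q⁻¹) := by
  simp only [symQ, Real.rpow_eq_pow, Real.rpow_neg hq, Real.rpow_natCast, inv_pow]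

variable {f : ℂ → ℂ}

lemma Dq_eq_dslope (hq : (q : ℂ) - (q : ℂ)⁻¹ ≠ 0) (f : ℂ → ℂ) (z : ℂ) :
    Dq q f z = ((q : ℂ) - (q : ℂ)⁻¹)⁻¹ *
      (q * dslope f 0 (q * z) - (q : ℂ)⁻¹ * dslope f 0 ((q : ℂ)⁻¹ * z)) := by
  rcases eq_or_ne z 0 with rfl | hz
  · simp only [Dq, if_true, mul_zero, dslope_same, ← sub_mul, inv_mul_cancel_left₀ hq]
  · have hf (w : ℂ) : f w = f 0 + w * dslope f 0 w := by
      simpa [eq_sub_iff_add_eq', eq_comm] using sub_smul_dslope f 0 w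
    rw [Dq, if_neg hz, div_eq_inv_mul z, hf (q * z), hf ((q : ℂ)⁻¹ * z),
      div_eq_iff (mul_ne_zero hq hz)]
    linear_combination (-z * (q * dslope f 0 (q * z) - (q : ℂ)⁻¹ * dslope f 0 ((q : ℂ)⁻¹ * z))) *
      inv_mul_cancel₀ hq

lemma analyticAt_Dq (hq : (q : ℂ) - (q : ℂ)⁻¹ ≠ 0) (hf : AnalyticAt ℂ f 0) :
    AnalyticAt ℂ (Dq q f) 0 := by
  rw [funext (Dq_eq_dslope hq f)]
  have h := analyticAt_comp_const_mul (analyticAt_dslope hf)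
  exact analyticAt_const.mul ((analyticAt_const.mul (h q)).sub (analyticAt_const.mul (h _)))

lemma taylorCoeff_Dq (hq0 : 0 ≤ q) (hq : (q : ℂ) - (q : ℂ)⁻¹ ≠ 0) (hf : AnalyticAt ℂ f 0)
    (n : ℕ) : taylorCoeff (Dq q f) 0 n = symQ q (n + 1 : ℕ) * taylorCoeff f 0 (n + 1) := by
  have h := analyticAt_comp_const_mul (analyticAt_dslope hf)
  rw [funext (Dq_eq_dslope hq f), taylorCoeff_const_mul,
    taylorCoeff_sub (contDiffAt_const.mul (h q).contDiffAt)
      (contDiffAt_const.mul (h (q : ℂ)⁻¹).contDiffAt),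
    taylorCoeff_const_mul, taylorCoeff_const_mul, taylorCoeff_comp_const_mul (analyticAt_dslope hf),
    taylorCoeff_comp_const_mul (analyticAt_dslope hf), taylorCoeff_dslope hf, symQ_natCast hq0]
  push_cast
  ring

end SymmetricQCalculus

section Subordination

variable {f φ u : ℂ → ℂ} {q : ℝ} {l : ℂ}

lemma taylorCoeff_cpow_const {x : ℂ} (hf : AnalyticAt ℂ f x) (hfx : f x = 1) (l : ℂ) :
    taylorCoeff (fun z ↦ f z ^ l) x 1 = l * taylorCoeff f x 1 ∧
      taylorCoeff (fun z ↦ f z ^ l) x 2 =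
        l * taylorCoeff f x 2 + taylorCoeff (fun w ↦ w ^ l) 1 2 * taylorCoeff f x 1 ^ 2 := by
  have hpow : AnalyticAt ℂ (fun w ↦ w ^ l) (f x) :=
    analyticAt_id.cpow analyticAt_const (by simp [hfx])
  have hpow' : taylorCoeff (fun w ↦ w ^ l) (f x) 1 = l := by
    rw [taylorCoeff_one, hfx]
    simpa using ((hasDerivAt_id (1 : ℂ)).cpow_const one_mem_slitPlane (c := l)).deriv
  have h₁ := taylorCoeff_comp_one hpow.differentiableAt hf.differentiableAt
  have h₂ := taylorCoeff_comp_two hpow.contDiffAt hf.contDiffAt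
  rw [hpow'] at h₁ h₂
  rw [hfx] at h₂
  exact ⟨h₁, h₂⟩

lemma taylorCoeff_relations_of_subordination (hq0 : 0 < q) (hq1 : q ≠ 1)
    (hf : AnalyticAt ℂ f 0) (hf' : deriv f 0 = 1)
    (hφ : AnalyticAt ℂ φ 0) (hφ0 : φ 0 = 1) (hu : AnalyticAt ℂ u 0) (hu0 : u 0 = 0)
    (hsub : ∀ᶠ z in 𝓝[≠] 0, 2 * z * Dq q f z ^ l / (f z - f (-z)) = φ (u z)) :
    l * symQ q 2 * taylorCoeff f 0 2 = taylorCoeff φ 0 1 * taylorCoeff u 0 1 ∧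
      (l * symQ q 3 - 1) * taylorCoeff f 0 3 +
          taylorCoeff (fun w ↦ w ^ l) 1 2 * (symQ q 2 * taylorCoeff f 0 2) ^ 2 =
        taylorCoeff φ 0 1 * taylorCoeff u 0 2 + taylorCoeff φ 0 2 * taylorCoeff u 0 1 ^ 2 := by
  have hq : (q : ℂ) - (q : ℂ)⁻¹ ≠ 0 := mod_cast sub_inv_ne_zero_of_pos hq0 hq1
  have hD : AnalyticAt ℂ (Dq q f) 0 := analyticAt_Dq hq hf
  have hD0 : Dq q f 0 = 1 := by simp [Dq, hf']
  have hprod : (fun z ↦ 2 * (z * Dq q f z ^ l)) =ᶠ[𝓝 0] fun z ↦ (f z - f (-z)) * φ (u z) := by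
    have hne := eventually_sub_comp_neg_ne_zero hf.differentiableAt (by simp [hf'])
    filter_upwards [eventually_nhdsWithin_iff.1 hsub, eventually_nhdsWithin_iff.1 hne]
      with z hz hzne
    rcases eq_or_ne z 0 with rfl | hz0
    · simp
    · rw [← hz hz0, mul_div_cancel₀ _ (hzne hz0), mul_assoc]
  have hφu : AnalyticAt ℂ (fun z ↦ φ (u z)) 0 := hφ.comp_of_eq hu hu0
  obtain ⟨h₁, h₂⟩ := taylorCoeff_of_two_mul_id_mul_eq hf
    (hD.cpow analyticAt_const (by simp [hD0])) hφu hprod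
  obtain ⟨hpow₁, hpow₂⟩ := taylorCoeff_cpow_const hD hD0 l
  have hcomp₁ := taylorCoeff_comp_one (hu0 ▸ hφ.differentiableAt) hu.differentiableAt
  have hcomp₂ := taylorCoeff_comp_two (hu0 ▸ hφ.contDiffAt) hu.contDiffAt
  simp only [hpow₁, hpow₂, hcomp₁, hcomp₂, hu0, hφ0, taylorCoeff_zero, taylorCoeff_one f, hf',
    taylorCoeff_Dq hq0.le hq hf] at h₁ h₂
  norm_num at h₁ h₂
  exact ⟨by linear_combination h₁, by linear_combination h₂⟩

end Subordination

lemma eq_of_second_order_relations {K : Type*} [Field K] [CharZero K]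
    {l Q₂ Q₃ κ a₂ a₃ E₁ E₂ c₁ c₂ d₁ d₂ : K} (hl : l ≠ 0) (hQ₂ : Q₂ ≠ 0) (hQ₃ : l * Q₃ ≠ 1)
    (hE₁ : E₁ ≠ 0) (hf₁ : l * Q₂ * a₂ = E₁ * (c₁ / 2)) (hg₁ : l * Q₂ * -a₂ = E₁ * (d₁ / 2))
    (hf₂ : (l * Q₃ - 1) * a₃ + κ * (Q₂ * a₂) ^ 2 =
      E₁ * (c₂ / 2 - c₁ ^ 2 / 4) + E₂ * (c₁ / 2) ^ 2)
    (hg₂ : (l * Q₃ - 1) * (2 * a₂ ^ 2 - a₃) + κ * (Q₂ * -a₂) ^ 2 =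
      E₁ * (d₂ / 2 - d₁ ^ 2 / 4) + E₂ * (d₁ / 2) ^ 2) :
    a₃ = E₁ * (c₂ - d₂) / (4 * (l * Q₃ - 1)) + E₁ ^ 2 * c₁ ^ 2 / (4 * l ^ 2 * Q₂ ^ 2) := by
  have hd₁ : d₁ = -c₁ := mul_left_cancel₀ hE₁ (by linear_combination -2 * (hf₁ + hg₁))
  have ha₂ : a₂ = E₁ * c₁ / (2 * l * Q₂) := by
    field_simp
    linear_combination 2 * hf₁
  have ha₃ : a₃ = E₁ * (c₂ - d₂) / (4 * (l * Q₃ - 1)) + a₂ ^ 2 := by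
    rw [hd₁] at hg₂
    have := sub_ne_zero.2 hQ₃
    field_simp
    linear_combination 2 * (hf₂ - hg₂)
  rw [ha₃, ha₂]
  ring

theorem coeff_a3_eq_general
    (q : ℝ) (hq0 : 0 < q) (hq1 : q ≠ 1)
    (f g : ℂ → ℂ) (a : ℕ → ℂ)
    (hf : AnalyticAt ℂ f 0) (hf0 : f 0 = 0) (hf'0 : deriv f 0 = 1)
    (hfa : ∀ᶠ z in 𝓝 0, f z = ∑' n, a n * z ^ n)
    (hg : AnalyticAt ℂ g 0) (hgf : ∀ᶠ z in 𝓝 0, g (f z) = z)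
    (φ : ℂ → ℂ) (E : ℕ → ℂ)
    (hφ : AnalyticAt ℂ φ 0) (hφ0 : φ 0 = 1)
    (hφE : ∀ᶠ z in 𝓝 0, φ z = ∑' n, E n * z ^ n) (hE1 : E 1 ≠ 0)
    (lam : ℂ) (hlam0 : lam ≠ 0) (hlam : lam * symQ q 3 ≠ 1)
    (u v : ℂ → ℂ) (hu : AnalyticAt ℂ u 0) (hu0 : u 0 = 0) (hv : AnalyticAt ℂ v 0) (hv0 : v 0 = 0)
    (hsubf : ∀ᶠ z in 𝓝[≠] 0, 2 * z * Dq q f z ^ lam / (f z - f (-z)) = φ (u z))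
    (hsubg : ∀ᶠ w in 𝓝[≠] 0, 2 * w * Dq q g w ^ lam / (g w - g (-w)) = φ (v w))
    (c d : ℕ → ℂ)
    (hc : ∀ᶠ z in 𝓝 0, (1 + u z) / (1 - u z) = ∑' n, c n * z ^ n)
    (hd : ∀ᶠ w in 𝓝 0, (1 + v w) / (1 - v w) = ∑' n, d n * w ^ n) :
    a 3 = E 1 * (c 2 - d 2) / (4 * (lam * symQ q 3 - 1)) +
      E 1 ^ 2 * c 1 ^ 2 / (4 * lam ^ 2 * symQ q 2 ^ 2) := by
  have hQ2 : (symQ q 2 : ℂ) ≠ 0 :=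
    mod_cast (zero_lt_one.trans (one_lt_symQ hq0 hq1 one_lt_two)).ne'
  have hfa' : ∀ n, taylorCoeff f 0 n = a n := taylorCoeff_eq_of_tsum hfa <|
    hf.differentiableAt.hasDerivAt.eventually_ne (by simp [hf'0])
  have hφE' : ∀ n, taylorCoeff φ 0 n = E n := taylorCoeff_eq_of_tsum hφE <|
    (hφ.continuousAt.eventually_ne (by simp [hφ0])).filter_mono nhdsWithin_le_nhds
  obtain ⟨hu₁, hu₂⟩ := taylorCoeff_of_cayley_eq_tsum hu hu0 hc
  obtain ⟨hv₁, hv₂⟩ := taylorCoeff_of_cayley_eq_tsum hv hv0 hd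
  obtain ⟨hg₁, hg₂, hg₃⟩ :=
    taylorCoeff_of_leftInverse hf.contDiffAt (by simpa [hf0] using hg.contDiffAt) hf'0 hgf
  rw [hf0] at hg₁ hg₂ hg₃
  have hg'0 : deriv g 0 = 1 := by rw [← taylorCoeff_one, hg₁]
  obtain ⟨hf_one, hf_two⟩ :=
    taylorCoeff_relations_of_subordination hq0 hq1 hf hf'0 hφ hφ0 hu hu0 hsubf
  obtain ⟨hg_one, hg_two⟩ :=
    taylorCoeff_relations_of_subordination hq0 hq1 hg hg'0 hφ hφ0 hv hv0 hsubg
  rw [hg₂] at hg_one hg_two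
  rw [hg₃] at hg_two
  simp only [hfa', hφE', hu₁, hu₂, hv₁, hv₂] at hf_one hf_two hg_one hg_two
  exact eq_of_second_order_relations hlam0 hQ2 hlam hE1 hf_one hg_one hf_two hg_two

theorem coeff_a3_eq
    (q : ℝ) (hq0 : 0 < q) (hq1 : q < 1)
    (f g : ℂ → ℂ) (a : ℕ → ℂ)
    (hf : AnalyticOnNhd ℂ f (ball 0 1)) (hf0 : f 0 = 0) (hf'0 : deriv f 0 = 1)
    (hfa : ∀ z ∈ ball (0 : ℂ) 1, f z = ∑' n, a n * z ^ n)
    (ha0 : a 0 = 0) (ha1 : a 1 = 1)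
    (hfinj : InjOn f (ball 0 1))
    (hg : AnalyticOnNhd ℂ g (ball 0 1)) (hg0 : g 0 = 0)
    (hginj : InjOn g (ball 0 1))
    (hgf : ∀ᶠ z in nhds (0 : ℂ), g (f z) = z)
    (φ : ℂ → ℂ) (E : ℕ → ℂ) (E1 : ℝ)
    (hφa : AnalyticOnNhd ℂ φ (ball 0 1)) (hφ0 : φ 0 = 1)
    (hφre : ∀ z ∈ ball (0 : ℂ) 1, 0 < (φ z).re)
    (hφE : ∀ z ∈ ball (0 : ℂ) 1, φ z = ∑' n, E n * z ^ n)
    (hE0 : E 0 = 1) (hE1 : E 1 = (E1 : ℂ)) (hE1pos : 0 < E1)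
    (lam : ℝ) (hlam : 1 ≤ lam)
    (u v : ℂ → ℂ) (hu : IsSchwarz u) (hv : IsSchwarz v)
    (hsubf : ∀ z ∈ ball (0 : ℂ) 1, z ≠ 0 →
      2 * z * Dq q f z ^ (lam : ℂ) / (f z - f (-z)) = φ (u z))
    (hsubg : ∀ w ∈ ball (0 : ℂ) 1, w ≠ 0 →
      2 * w * Dq q g w ^ (lam : ℂ) / (g w - g (-w)) = φ (v w))
    (c d : ℕ → ℂ) (hc0 : c 0 = 1) (hd0 : d 0 = 1)
    (hc : ∀ z ∈ ball (0 : ℂ) 1, (1 + u z) / (1 - u z) = ∑' n, c n * z ^ n)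
    (hd : ∀ w ∈ ball (0 : ℂ) 1, (1 + v w) / (1 - v w) = ∑' n, d n * w ^ n)
    :
    a 3 = (E1 : ℂ) * (c 2 - d 2) / (4 * ((lam : ℂ) * (symQ q 3 : ℂ) - 1)) +
      (E1 : ℂ) ^ 2 * c 1 ^ 2 / (4 * (lam : ℂ) ^ 2 * (symQ q 2 : ℂ) ^ 2) := by
  have hball {P : ℂ → Prop} (h : ∀ z ∈ ball (0 : ℂ) 1, P z) : ∀ᶠ z in 𝓝 0, P z :=
    eventually_of_mem (ball_mem_nhds 0 one_pos) h
  have h0 : (0 : ℂ) ∈ ball (0 : ℂ) 1 := mem_ball_self one_pos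
  have hlam0 : (lam : ℂ) ≠ 0 := mod_cast (zero_lt_one.trans_le hlam).ne'
  have hlam3 : (lam : ℂ) * symQ q 3 ≠ 1 := mod_cast
    (one_lt_mul_of_le_of_lt hlam (one_lt_symQ hq0 hq1.ne (by norm_num))).ne'
  rw [← hE1]
  exact coeff_a3_eq_general q hq0 hq1.ne f g a (hf 0 h0) hf0 hf'0 (hball hfa) (hg 0 h0) hgf
    φ E (hφa 0 h0) hφ0 (hball hφE) (by simpa [hE1] using hE1pos.ne') lam hlam0 hlam3
    u v (hu.1 0 h0) hu.2.1 (hv.1 0 h0) hv.2.1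
    (eventually_nhdsWithin_iff.2 (hball hsubf)) (eventually_nhdsWithin_iff.2 (hball hsubg))
    c d (hball hc) (hball hd)
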